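/- Let A be an associative ℚ(v)-algebra containing elements E, F and an invertible element K satisfying K E = v² E K, K F = v^{−2} F K, and E F − F E = (K − K^{−1})/(v − v^{−1}). Then for all m, n ≥ 0, E^{(m)} F^{(n)} = ∑_{t=0}^{min(m,n)} F^{(n−t)} [K; 2t−m−n, t]_v E^{(m−t)}, where [K;c,t]_v = ∏_{s=1}^{t} (K v^{c−s+1} − K^{−1} v^{−c+s−1})/(v^s − v^{−s}). -/

import Mathlib

/-!
The proof is by induction on `m`, multiplying the formula for `m` on the left by `E`.

Write `br a = v^a - v^{-a}` and `kk c = v^c K - v^{-c} K⁻¹`, so that `[K;c,t]` is a product of the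
factors `kk (c - s) / br (s + 1)`. Three facts carry the argument:
* moving `E` or `F` past `kk c` shifts `c` by `2` (`E_mul_kk`, `F_mul_kk`), hence `E` can be moved
  past `[K;c,t]` (`E_mul_KbrA`);
* the case `m = 1`, `E F^{(n)} = F^{(n)} E + F^{(n-1)} [K;1-n,1]` (`E_mul_dpz`);
* the identity `br (a+b) kk c = br a kk (c-b) + br b kk (c+a)` (`br_add_smul_kk`), which combines
  the two contributions to the coefficient of index `t` into `[m+1] [K;2t-m-1-n,t]`
  (`coeff_identity`).

To avoid boundary cases, divided powers are extended by zero to negative exponents (`dpz`); with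
this convention both recursions hold for all integer exponents, and the sum may be taken over
`t ≤ m` whatever `n` is.
-/

/-- `v^n` in `ℚ(v)` for `n : ℤ`. -/
noncomputable def qv (n : ℤ) : RatFunc ℚ := (RatFunc.X : RatFunc ℚ) ^ n

/-- The balanced quantum integer `[m]_v = (v^m − v^{−m})/(v − v^{−1})` in `ℚ(v)`. -/
noncomputable def qint (m : ℕ) : RatFunc ℚ := (qv m - qv (-(m : ℤ))) / (qv 1 - qv (-1))

/-- The balanced quantum factorial `[m]!_v` in `ℚ(v)`. -/
noncomputable def qfact (m : ℕ) : RatFunc ℚ := ∏ k ∈ Finset.range m, qint (k + 1)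

/-- The divided power `x^{(m)} = x^m/[m]!_v` in a `ℚ(v)`-algebra. -/
noncomputable def dp {A : Type*} [Ring A] [Algebra (RatFunc ℚ) A] (x : A) (m : ℕ) : A :=
  (qfact m)⁻¹ • x ^ m

/-- `[K;c,t]_v = ∏_{s=1}^{t} (K v^{c−s+1} − K^{−1} v^{−c+s−1})/(v^s − v^{−s})` for an
invertible element `K` (with given inverse `Kinv`) of a `ℚ(v)`-algebra. -/
noncomputable def KbrA {A : Type*} [Ring A] [Algebra (RatFunc ℚ) A]
    (K Kinv : A) (c : ℤ) (t : ℕ) : A :=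
  ((List.range t).map (fun s =>
    (qv ((s : ℤ) + 1) - qv (-(s : ℤ) - 1))⁻¹ •
      (qv (c - (s : ℤ)) • K - qv (-c + (s : ℤ)) • Kinv))).prod

/-! ### Scalars -/

/-- `v^a - v^{-a}`, the numerator of the quantum integer `[a]_v`, for `a : ℤ`. -/
noncomputable def br (a : ℤ) : RatFunc ℚ := qv a - qv (-a)

lemma qv_add (a b : ℤ) : qv (a + b) = qv a * qv b := zpow_add₀ RatFunc.X_ne_zero a b

lemma qv_neg (a : ℤ) : qv (-a) = (qv a)⁻¹ := zpow_neg _ a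

lemma qv_sub (a b : ℤ) : qv (a - b) = qv a * (qv b)⁻¹ := by
  rw [sub_eq_add_neg, qv_add, qv_neg]

lemma qv_ne_zero (a : ℤ) : qv a ≠ 0 := zpow_ne_zero _ RatFunc.X_ne_zero

lemma qv_zero : qv 0 = 1 := zpow_zero _

lemma br_zero : br 0 = 0 := by simp [br]

/-- `v` is not a root of unity, so the denominators do not vanish. -/
lemma br_ne_zero (n : ℕ) : br ((n : ℤ) + 1) ≠ 0 := by
  intro h
  have h1 : qv ((n : ℤ) + 1) * qv ((n : ℤ) + 1) = 1 := by
    have h2 := sub_eq_zero.1 h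
    rw [qv_neg] at h2
    nth_rewrite 2 [h2]
    exact mul_inv_cancel₀ (qv_ne_zero _)
  rw [← qv_add] at h1
  have h3 : (RatFunc.X : RatFunc ℚ) ^ (n + 1 + (n + 1)) = 1 := by
    rw [← h1, qv, ← zpow_natCast]
    push_cast
    rfl
  rw [← RatFunc.algebraMap_X, ← map_pow, ← map_one (algebraMap (Polynomial ℚ) (RatFunc ℚ))] at h3
  have h4 := congrArg Polynomial.natDegree (RatFunc.algebraMap_injective ℚ h3)
  simp at h4

lemma br_one_ne_zero : br 1 ≠ 0 := by simpa using br_ne_zero 0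

lemma qint_eq (m : ℕ) : qint m = br m / br 1 := rfl

lemma qint_ne_zero (m : ℕ) : qint (m + 1) ≠ 0 := by
  rw [qint_eq]
  push_cast
  exact div_ne_zero (br_ne_zero m) br_one_ne_zero

lemma qfact_succ (m : ℕ) : qfact (m + 1) = qfact m * qint (m + 1) := Finset.prod_range_succ _ _

lemma qfact_ne_zero (m : ℕ) : qfact m ≠ 0 :=
  Finset.prod_ne_zero_iff.2 fun k _ => qint_ne_zero k

section
variable {A : Type*} [Ring A] [Algebra (RatFunc ℚ) A]

/-! ### The elements `v^c K - v^{-c} K⁻¹` -/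

/-- The element `v^c K - v^{-c} K⁻¹`, equal to `(v - v^{-1}) [K;c,1]_v`. -/
noncomputable def kk (K Kinv : A) (c : ℤ) : A := qv c • K - qv (-c) • Kinv

lemma br_add_smul_kk (K Kinv : A) (a b c : ℤ) :
    br (a + b) • kk K Kinv c = br a • kk K Kinv (c - b) + br b • kk K Kinv (c + a) := by
  have ha := qv_ne_zero a
  have hb := qv_ne_zero b
  have hc := qv_ne_zero c
  have h1 : br (a + b) * qv c = br a * qv (c - b) + br b * qv (c + a) := by
    simp only [br, qv_neg, qv_add, qv_sub]
    field_simp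
    ring
  have h2 : br (a + b) * qv (-c) = br a * qv (-(c - b)) + br b * qv (-(c + a)) := by
    simp only [br, qv_neg, qv_add, qv_sub]
    field_simp
    ring
  simp only [kk, smul_sub, smul_smul]
  rw [h1, h2, add_smul, add_smul, add_sub_add_comm]

lemma kk_commute {K Kinv : A} (hK : K * Kinv = 1) (hK' : Kinv * K = 1) (a b : ℤ) :
    kk K Kinv a * kk K Kinv b = kk K Kinv b * kk K Kinv a := by
  simp only [kk, mul_sub, sub_mul, smul_mul_assoc, mul_smul_comm, smul_sub, smul_smul, hK, hK',
    mul_comm (qv b), mul_comm (qv (-b))]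
  abel

/-- Moving an element of weight `d` past `kk`; used for `E` with `d = 2`, `F` with `d = -2`. -/
lemma weight_mul_kk {X K Kinv : A} (d : ℤ) (hK : K * Kinv = 1) (hK' : Kinv * K = 1)
    (hKX : K * X = qv d • (X * K)) (c : ℤ) :
    X * kk K Kinv c = kk K Kinv (c - d) * X := by
  have hd := qv_ne_zero d
  have h1 : X * Kinv = qv d • (Kinv * X) := by
    have : Kinv * (K * X) * Kinv = Kinv * (qv d • (X * K)) * Kinv := by rw [hKX]
    rw [← mul_assoc, hK', one_mul, mul_smul_comm, smul_mul_assoc, ← mul_assoc, mul_assoc _ K,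
      hK, mul_one] at this
    exact this
  simp only [kk, mul_sub, sub_mul, smul_mul_assoc, mul_smul_comm, hKX, h1, smul_smul]
  congr 2
  · rw [qv_sub]
    field_simp
  · rw [← qv_add]
    congr 1
    ring

lemma E_mul_kk {E K Kinv : A} (hK : K * Kinv = 1) (hK' : Kinv * K = 1)
    (hKE : K * E = qv 2 • (E * K)) (c : ℤ) : E * kk K Kinv c = kk K Kinv (c - 2) * E :=
  weight_mul_kk 2 hK hK' hKE c

lemma F_mul_kk {F K Kinv : A} (hK : K * Kinv = 1) (hK' : Kinv * K = 1)
    (hKF : K * F = qv (-2) • (F * K)) (c : ℤ) : F * kk K Kinv c = kk K Kinv (c + 2) * F := by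
  rw [weight_mul_kk (-2) hK hK' hKF c, sub_neg_eq_add]

/-! ### The elements `[K;c,t]` -/

lemma KbrA_zero (K Kinv : A) (c : ℤ) : KbrA K Kinv c 0 = 1 := by simp [KbrA]

lemma KbrA_succ (K Kinv : A) (c : ℤ) (t : ℕ) :
    KbrA K Kinv c (t + 1) = (br (t + 1))⁻¹ • (KbrA K Kinv c t * kk K Kinv (c - t)) := by
  have e1 : -((t : ℤ) + 1) = -t - 1 := by ring
  have e2 : -(c - (t : ℤ)) = -c + t := by ring
  rw [br, kk, e1, e2, ← mul_smul_comm]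
  simp [KbrA, List.range_succ]

lemma KbrA_succ' (K Kinv : A) (c : ℤ) (t : ℕ) :
    KbrA K Kinv c (t + 1) = (br (t + 1))⁻¹ • (kk K Kinv c * KbrA K Kinv (c - 1) t) := by
  induction t with
  | zero => simp [KbrA_succ, KbrA_zero]
  | succ t ih =>
    rw [KbrA_succ, ih, KbrA_succ K Kinv (c - 1)]
    have : c - 1 - (t : ℤ) = c - ((t + 1 : ℕ) : ℤ) := by push_cast; ring
    rw [this]
    simp only [mul_smul_comm, smul_mul_assoc, mul_assoc]

lemma KbrA_mul_kk {K Kinv : A} (hK : K * Kinv = 1) (hK' : Kinv * K = 1) (c a : ℤ) (t : ℕ) :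
    KbrA K Kinv c t * kk K Kinv a = kk K Kinv a * KbrA K Kinv c t := by
  induction t with
  | zero => simp [KbrA_zero]
  | succ t ih =>
    rw [KbrA_succ, smul_mul_assoc, mul_smul_comm, mul_assoc, kk_commute hK hK', ← mul_assoc, ih,
      mul_assoc]

lemma E_mul_KbrA {E K Kinv : A} (hK : K * Kinv = 1) (hK' : Kinv * K = 1)
    (hKE : K * E = qv 2 • (E * K)) (c : ℤ) (t : ℕ) :
    E * KbrA K Kinv c t = KbrA K Kinv (c - 2) t * E := by
  induction t with
  | zero => simp [KbrA_zero]
  | succ t ih =>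
    rw [KbrA_succ, KbrA_succ, mul_smul_comm, smul_mul_assoc, ← mul_assoc, ih, mul_assoc,
      E_mul_kk hK hK' hKE, mul_assoc, sub_right_comm]

/-- With `a = m + 1`, this is the comparison of the coefficients of index `t + 1` in the
induction step. -/
lemma coeff_identity {K Kinv : A} (hK : K * Kinv = 1) (hK' : Kinv * K = 1) (a n : ℤ) (t : ℕ) :
    br a • KbrA K Kinv (2 * ((t : ℤ) + 1) - a - n) (t + 1) =
      br (a - (t + 1)) • KbrA K Kinv (2 * ((t : ℤ) + 1) - a - n - 1) (t + 1) +
        kk K Kinv (t + 1 - n) * KbrA K Kinv (2 * (t : ℤ) - (a - 1) - n) t := by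
  have e1 : 2 * ((t : ℤ) + 1) - a - n - 1 = 2 * (t : ℤ) - (a - 1) - n := by ring
  have key := br_add_smul_kk K Kinv (a - (t + 1)) (t + 1) (2 * ((t : ℤ) + 1) - a - n)
  rw [sub_add_cancel] at key
  have e2 : 2 * ((t : ℤ) + 1) - a - n - (t + 1) = 2 * (t : ℤ) - (a - 1) - n - t := by ring
  have e3 : 2 * ((t : ℤ) + 1) - a - n + (a - (t + 1)) = t + 1 - n := by ring
  rw [e2, e3] at key
  rw [KbrA_succ', e1, KbrA_succ, KbrA_mul_kk hK hK', smul_comm, ← smul_mul_assoc, key, add_mul,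
    smul_add, smul_mul_assoc, smul_mul_assoc, smul_comm, smul_smul (br (t + 1))⁻¹,
    inv_mul_cancel₀ (br_ne_zero t), one_smul]

/-! ### Divided powers with integer exponent -/

/-- The divided power `x^{(z)}` for `z : ℤ`, which is `0` for negative `z`. -/
noncomputable def dpz (x : A) (z : ℤ) : A := if 0 ≤ z then dp x z.toNat else 0

lemma dpz_natCast (x : A) (n : ℕ) : dpz x n = dp x n := by simp [dpz]

lemma dpz_neg (x : A) {z : ℤ} (hz : z < 0) : dpz x z = 0 := by simp [dpz, hz]

lemma dp_zero (x : A) : dp x 0 = 1 := by simp [dp, qfact]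

lemma mul_dp (x : A) (m : ℕ) : x * dp x m = qint (m + 1) • dp x (m + 1) := by
  rw [dp, dp, qfact_succ, mul_smul_comm, smul_smul, pow_succ']
  congr 1
  have := qint_ne_zero m
  have := qfact_ne_zero m
  field_simp

lemma mul_dpz (x : A) (z : ℤ) : x * dpz x z = (br (z + 1) / br 1) • dpz x (z + 1) := by
  rcases lt_trichotomy z (-1) with h | rfl | h
  · rw [dpz_neg _ (by omega), dpz_neg _ (by omega), mul_zero, smul_zero]
  · rw [dpz_neg _ (by omega)]
    simp [br_zero]
  · obtain ⟨m, rfl⟩ := Int.eq_ofNat_of_zero_le (show 0 ≤ z by omega)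
    have := mul_dp x m
    rw [qint_eq, ← dpz_natCast, ← dpz_natCast] at this
    exact_mod_cast this

lemma E_mul_F_pow {E F K Kinv : A} (hK : K * Kinv = 1) (hK' : Kinv * K = 1)
    (hKF : K * F = qv (-2) • (F * K))
    (hEF : E * F - F * E = (qv 1 - qv (-1))⁻¹ • (K - Kinv)) (n : ℕ) :
    E * F ^ (n + 1) = F ^ (n + 1) * E +
      (qint (n + 1) * (br 1)⁻¹) • (F ^ n * kk K Kinv (-n)) := by
  have hEF' : E * F = F * E + (br 1)⁻¹ • kk K Kinv 0 := by
    rw [← sub_eq_iff_eq_add', hEF]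
    simp [kk, br, qv_zero]
  induction n with
  | zero =>
    have : qint (0 + 1) = 1 := by
      rw [qint_eq]
      simpa using div_self br_one_ne_zero
    rw [this]
    simpa using hEF'
  | succ n ih =>
    have h0 := br_one_ne_zero
    have key := br_add_smul_kk K Kinv (n + 1) 1 (-((n : ℤ) + 1))
    rw [neg_add_cancel] at key
    have hF : kk K Kinv (-(n : ℤ)) * F = F * kk K Kinv (-((n : ℤ) + 1) - 1) := by
      rw [F_mul_kk hK hK' hKF]
      congr 2
      ring
    rw [pow_succ F (n + 1), ← mul_assoc, ih, add_mul, mul_assoc, hEF', smul_mul_assoc, mul_assoc,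
      hF, ← mul_assoc (F ^ n), ← pow_succ, mul_add, ← mul_assoc, add_assoc]
    congr 1
    rw [mul_smul_comm, qint_eq, qint_eq]
    push_cast
    have e : (br ((n : ℤ) + 1 + 1) / br 1 * (br 1)⁻¹) •
          (F ^ (n + 1) * kk K Kinv (-((n : ℤ) + 1))) =
        ((br 1)⁻¹ * (br 1)⁻¹) •
          (F ^ (n + 1) * (br ((n : ℤ) + 1 + 1) • kk K Kinv (-((n : ℤ) + 1)))) := by
      rw [mul_smul_comm, smul_smul]
      congr 1
      ring
    rw [e, key, mul_add, mul_smul_comm, mul_smul_comm, smul_add, smul_smul, smul_smul, add_comm]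
    congr 2
    · ring
    · field_simp

/-- The case `m = 1` of the theorem, for integer exponents. -/
lemma E_mul_dpz {E F K Kinv : A} (hK : K * Kinv = 1) (hK' : Kinv * K = 1)
    (hKF : K * F = qv (-2) • (F * K))
    (hEF : E * F - F * E = (qv 1 - qv (-1))⁻¹ • (K - Kinv)) (z : ℤ) :
    E * dpz F z = dpz F z * E + (br 1)⁻¹ • (dpz F (z - 1) * kk K Kinv (1 - z)) := by
  rcases lt_trichotomy z 0 with h | rfl | h
  · rw [dpz_neg _ h, dpz_neg _ (by omega)]
    simp
  · rw [dpz_neg F (show (0 : ℤ) - 1 < 0 by omega)]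
    have := dpz_natCast F 0
    rw [dp_zero, Nat.cast_zero] at this
    simp [this]
  · obtain ⟨n, hn⟩ := Int.eq_ofNat_of_zero_le (show 0 ≤ z - 1 by omega)
    obtain rfl : z = ((n + 1 : ℕ) : ℤ) := by push_cast; omega
    have e : (1 : ℤ) - ((n + 1 : ℕ) : ℤ) = -n := by push_cast; ring
    rw [hn, e, dpz_natCast, dpz_natCast, dp, dp, mul_smul_comm, E_mul_F_pow hK hK' hKF hEF,
      smul_add, smul_mul_assoc, smul_mul_assoc, smul_smul, smul_smul, qfact_succ]
    congr 2
    have := qint_ne_zero n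
    have := qfact_ne_zero n
    field_simp

/-! ### The induction -/

/-- The theorem with divided powers extended by zero. -/
lemma dp_mul_dp {E F K Kinv : A} (hK : K * Kinv = 1) (hK' : Kinv * K = 1)
    (hKE : K * E = qv 2 • (E * K)) (hKF : K * F = qv (-2) • (F * K))
    (hEF : E * F - F * E = (qv 1 - qv (-1))⁻¹ • (K - Kinv)) (m n : ℕ) :
    dp E m * dp F n = ∑ t ∈ Finset.range (m + 1),
      dpz F (n - t) * KbrA K Kinv (2 * (t : ℤ) - m - n) t * dpz E (m - t) := by
  induction m with
  | zero =>
    have := dpz_natCast E 0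
    rw [dp_zero, Nat.cast_zero] at this
    simp [KbrA_zero, dp_zero, dpz_natCast, this]
  | succ m ih =>
    have h0 := br_one_ne_zero
    have hm := br_ne_zero m
    -- Multiplying by `br (m + 1)`, rather than `[m + 1]`, clears all denominators but those in
    -- the elements `[K;c,t]`.
    have hE : br (m + 1) • dp E (m + 1) = br 1 • (E * dp E m) := by
      rw [mul_dp, smul_smul, qint_eq]
      push_cast
      congr 1
      field_simp
    have step : ∀ t : ℕ, br 1 • (E * (dpz F (n - t) * KbrA K Kinv (2 * (t : ℤ) - m - n) t *
          dpz E (m - t))) =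
        dpz F (n - t) * (br (m + 1 - t) • KbrA K Kinv (2 * (t : ℤ) - (m + 1) - n - 1) t) *
          dpz E (m + 1 - t) +
        dpz F (n - (t + 1)) * (kk K Kinv (t + 1 - n) * KbrA K Kinv (2 * (t : ℤ) - m - n) t) *
          dpz E (m - t) := by
      intro t
      have e1 : 2 * (t : ℤ) - m - n - 2 = 2 * (t : ℤ) - (m + 1) - n - 1 := by ring
      have e2 : (m : ℤ) - t + 1 = m + 1 - t := by ring
      have e3 : (1 : ℤ) - (n - t) = t + 1 - n := by ring
      have e4 : (n : ℤ) - t - 1 = n - (t + 1) := by ring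
      rw [← mul_assoc, ← mul_assoc, E_mul_dpz hK hK' hKF hEF, add_mul, add_mul, smul_add,
        mul_assoc (dpz F (n - t)) E, E_mul_KbrA hK hK' hKE, mul_assoc (dpz F (n - t)),
        mul_assoc _ E, mul_dpz, e1, e2, e3, e4, smul_mul_assoc, smul_mul_assoc, smul_smul,
        mul_inv_cancel₀ h0, one_smul]
      simp only [mul_smul_comm, smul_mul_assoc, smul_smul, mul_assoc]
      rw [mul_div_cancel₀ _ h0]
    have goal : br (m + 1) • (dp E (m + 1) * dp F n) =
        br (m + 1) • ∑ t ∈ Finset.range (m + 1 + 1),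
          dpz F (n - t) * KbrA K Kinv (2 * (t : ℤ) - ((m + 1 : ℕ) : ℤ) - n) t *
            dpz E (((m + 1 : ℕ) : ℤ) - t) := by
      rw [← smul_mul_assoc, hE, smul_mul_assoc, mul_assoc, ih, Finset.mul_sum, Finset.smul_sum,
        Finset.sum_congr rfl fun t _ => step t, Finset.sum_add_distrib]
      -- The first sum may be extended to `t = m + 1`, where its term vanishes.
      have ext0 : dpz F (n - ((m + 1 : ℕ) : ℤ)) * (br (m + 1 - ((m + 1 : ℕ) : ℤ)) •
          KbrA K Kinv (2 * ((m + 1 : ℕ) : ℤ) - (m + 1) - n - 1) (m + 1)) *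
          dpz E (m + 1 - ((m + 1 : ℕ) : ℤ)) = 0 := by
        have : (m : ℤ) + 1 - ((m + 1 : ℕ) : ℤ) = 0 := by push_cast; ring
        rw [this, br_zero]
        simp
      rw [← add_zero (∑ t ∈ Finset.range (m + 1), _ * _ * dpz E (m + 1 - (t : ℤ))), ← ext0,
        ← Finset.sum_range_succ (fun t : ℕ => dpz F (n - t) * (br (m + 1 - t) •
          KbrA K Kinv (2 * (t : ℤ) - (m + 1) - n - 1) t) * dpz E (m + 1 - t)),
        Finset.sum_range_succ', Finset.sum_range_succ' _ (m + 1), smul_add, add_right_comm,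
        ← Finset.sum_add_distrib, Finset.smul_sum]
      congr 1
      · refine Finset.sum_congr rfl fun t _ => ?_
        have c := coeff_identity hK hK' ((m : ℤ) + 1) n t
        rw [add_sub_cancel_right] at c
        have e : (m : ℤ) - t = m + 1 - (t + 1) := by ring
        push_cast
        rw [e, ← add_mul, ← mul_add, ← c, mul_smul_comm, smul_mul_assoc]
      · simp [KbrA_zero]
    exact smul_right_injective A hm goal

end

/-- Let `A` be an associative `ℚ(v)`-algebra containing elements `E`, `F` and an invertible
element `K` satisfying `K E = v² E K`, `K F = v^{−2} F K`, and
`E F − F E = (K − K^{−1})/(v − v^{−1})`.  Then for all `m, n ≥ 0`,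
`E^{(m)} F^{(n)} = ∑_{t=0}^{min(m,n)} F^{(n−t)} [K; 2t−m−n, t]_v E^{(m−t)}`. -/
theorem stmt6 {A : Type*} [Ring A] [Algebra (RatFunc ℚ) A]
    (E F K Kinv : A) (hK : K * Kinv = 1) (hK' : Kinv * K = 1)
    (hKE : K * E = qv 2 • (E * K)) (hKF : K * F = qv (-2) • (F * K))
    (hEF : E * F - F * E = (qv 1 - qv (-1))⁻¹ • (K - Kinv)) :
    ∀ m n : ℕ, dp E m * dp F n =
      ∑ t ∈ Finset.range (Nat.min m n + 1),
        dp F (n - t) * KbrA K Kinv (2 * (t : ℤ) - (m : ℤ) - (n : ℤ)) t * dp E (m - t) := by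
  intro m n
  rw [dp_mul_dp hK hK' hKE hKF hEF]
  symm
  have hmin : Nat.min m n = min m n := rfl
  have hsub : Finset.range (Nat.min m n + 1) ⊆ Finset.range (m + 1) := by
    intro t
    simp only [Finset.mem_range]
    omega
  rw [← Finset.sum_subset hsub]
  · refine Finset.sum_congr rfl fun t ht => ?_
    rw [Finset.mem_range] at ht
    have h1 : ((n - t : ℕ) : ℤ) = n - t := Nat.cast_sub (by omega)
    have h2 : ((m - t : ℕ) : ℤ) = m - t := Nat.cast_sub (by omega)
    rw [← dpz_natCast, ← dpz_natCast, h1, h2]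
  · intro t ht hnt
    rw [Finset.mem_range] at ht hnt
    -- Here `n < t`, so the divided power of `F` is zero.
    rw [dpz_neg F (by omega), zero_mul, zero_mul]
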